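/- Fix an integer N ≥ −1 and scalars D_1, …, D_{N+1} ∈ K. With the modes and conventions of the context (Z₂-twisted bosons b_r, r ∈ ℤ+1/2, and Z₂-twisted Ramond fermions ψ_n, n ∈ ℤ, with zero mode ψ_0 = (1/√(2ℏ))(θ^0 + ℏ ∂_{θ^0})), define for each integer i ≥ 1: H_i = ℏ ∂_{x^i} + (ℏ/2) Σ_{r∈ℤ+1/2} :b_r b_{i+N−1−r}: + (ℏ/2) Σ_{j∈ℤ} (j + (i+N−1)/2) :ψ_{−j} ψ_{i+N−1+j}: + (ℏ/8) [i = 1−N] + ℏ D_i [i ≤ N+1], and for r ∈ ℤ_{≥0}+1/2: F_r = ℏ ∂_{θ^{r+1/2}} + ℏ Σ_{s∈ℤ+1/2} b_s ψ_{r+N−s}. Then these operators form a representation of a subalgebra of the N=1 super Virasoro algebra in the Neveu–Schwarz sector: for all integers i, j ≥ 1 and all r, s ∈ ℤ_{≥0}+1/2, [H_i, H_j] = ℏ (i−j) H_{i+j+N−1}, [H_i, F_r] = ℏ ((i−N−1)/2 − r) F_{i+r+N−1}, and {F_r, F_s} = 2ℏ H_{r+s+N+1}; in the middle relation, whenever the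 subscript i+r+N−1 lies outside the allowed index range the scalar coefficient vanishes, so the relation is read with right-hand side 0. (This is a super quantum Airy structure with one extra fermionic variable θ^0.) -/

import Mathlib

/-!
Statement 10: the ρ-twisted free boson–fermion representation of a subalgebra of the N=1
super Virasoro algebra in the Neveu–Schwarz sector. Z₂-twisted bosons `b_r`, `r ∈ ℤ+1/2`,
act on `P = K[t,t⁻¹][x¹,x²,…]` (with `ℏ = t²`, `√ℏ = t`), Z₂-twisted Ramond fermions
`ψ_n`, `n ∈ ℤ`, with zero mode `ψ₀ = (1/√(2ℏ))(θ⁰ + ℏ∂_{θ⁰})`, act on `Λ(θ⁰,θ¹,…)`.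
Half-integer indices `r = n + 1/2 ∈ ℤ + 1/2` are parametrised by `n ∈ ℤ`.
The resulting super quantum Airy structure has one extra fermionic variable `θ⁰`.
-/

set_option synthInstance.maxHeartbeats 1000000
set_option maxHeartbeats 1000000

noncomputable section
open TensorProduct

variable (K : Type) [Field K] [CharZero K] (s2 : K)

/-- `R = K[t,t⁻¹]`, with `ℏ = t²`, `√ℏ = t`. -/
abbrev R := LaurentPolynomial K
/-- `ℏ = t² ∈ R`. -/
def hb : R K := LaurentPolynomial.T 2
/-- A scalar `c : K` viewed in `R`. -/
def cs (c : K) : R K := LaurentPolynomial.C c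
/-- The even part `P = R[x¹,x²,x³,…]`; variables are indexed by `ℕ+`. -/
abbrev Pev := MvPolynomial ℕ+ (R K)
/-- The odd part `Λ(θ⁰,θ¹,…)`; generators are indexed by `ℕ`. -/
abbrev Podd := ExteriorAlgebra (R K) (ℕ →₀ R K)
/-- The full carrier `S = P ⊗_R Λ`. -/
abbrev SuperSpace := Pev K ⊗[R K] Podd K

/-- `∂_{x^a}`, acting through the polynomial factor. -/
def dX (a : ℕ+) : SuperSpace K → SuperSpace K :=
  LinearMap.rTensor (Podd K) (MvPolynomial.pderiv a).toLinearMap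

/-- Multiplication by `x^a`, acting through the polynomial factor. -/
def mX (a : ℕ+) : SuperSpace K → SuperSpace K :=
  LinearMap.rTensor (Podd K) (LinearMap.mulLeft (R K) (MvPolynomial.X a))

/-- `∂_{θ^a}` (interior product with the dual basis vector), acting through the odd factor. -/
def dT (a : ℕ) : SuperSpace K → SuperSpace K :=
  LinearMap.lTensor (Pev K) (CliffordAlgebra.contractLeft (Finsupp.lapply a))

/-- Left multiplication by `θ^a`, acting through the odd factor. -/
def mT (a : ℕ) : SuperSpace K → SuperSpace K :=
  LinearMap.lTensor (Pev K)
    (LinearMap.mulLeft (R K) (ExteriorAlgebra.ι (R K) (Finsupp.single a 1)))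

/-- `∂_{x^a}` for `a ∈ ℤ`, vanishing for `a < 1`. -/
def dXi (a : ℤ) : SuperSpace K → SuperSpace K :=
  fun v => if h : 1 ≤ a then dX K ⟨a.toNat, by omega⟩ v else 0

/-- `∂_{θ^a}` for `a ∈ ℤ`, vanishing for `a < 1` (used only for the linear terms of `F_r`). -/
def dTi (a : ℤ) : SuperSpace K → SuperSpace K :=
  fun v => if 1 ≤ a then dT K a.toNat v else 0

/-- The Z₂-twisted boson mode `b_{n+1/2}`: `b_r = √ℏ ∂_{x^{r+1/2}}` and
`b_{−r} = (r/√ℏ) x^{r+1/2}` for `r ∈ ℤ_{≥0}+1/2`. -/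
def bos (n : ℤ) : SuperSpace K → SuperSpace K :=
  if h : 0 ≤ n then fun v => (LaurentPolynomial.T 1 : R K) • dX K ⟨(n + 1).toNat, by omega⟩ v
  else fun v =>
    ((((-2 * n - 1 : ℤ) : R K) * cs K (2 : K)⁻¹) * LaurentPolynomial.T (-1)) •
      mX K ⟨(-n).toNat, by omega⟩ v

/-- The Z₂-twisted (Ramond) fermion mode `ψ_n`: `ψ_n = √ℏ ∂_{θ^n}` and
`ψ_{−n} = (1/√ℏ) θ^n` for `n ≥ 1`, and `ψ₀ = (1/√(2ℏ))(θ⁰ + ℏ∂_{θ⁰})`. -/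
def fer (n : ℤ) : SuperSpace K → SuperSpace K :=
  if 1 ≤ n then fun v => (LaurentPolynomial.T 1 : R K) • dT K n.toNat v
  else if n = 0 then fun v =>
    (cs K s2⁻¹ * LaurentPolynomial.T (-1)) • (mT K 0 v + hb K • dT K 0 v)
  else fun v => (LaurentPolynomial.T (-1) : R K) • mT K (-n).toNat v

/-- The normally ordered boson bilinear `:b_{n+1/2} b_{m+1/2}:`. -/
def nb (n m : ℤ) : SuperSpace K → SuperSpace K :=
  if n ≤ m then fun v => bos K n (bos K m v) else fun v => bos K m (bos K n v)

/-- The normally ordered fermion bilinear `:ψ_α ψ_β:`. -/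
def nf (α β : ℤ) : SuperSpace K → SuperSpace K :=
  if α ≤ β then fun v => fer K s2 α (fer K s2 β v)
  else fun v => -(fer K s2 β (fer K s2 α v))

/-- `H_i = ℏ ∂_{x^i} + (ℏ/2) Σ_{r∈ℤ+1/2} :b_r b_{i+N−1−r}:
        + (ℏ/2) Σ_{j∈ℤ} (j + (i+N−1)/2) :ψ_{−j} ψ_{i+N−1+j}:
        + (ℏ/8) [i = 1−N] + ℏ D_i [i ≤ N+1]`,
the half-integer boson sum being parametrised by `r = n + 1/2`, `n ∈ ℤ`. -/
def Hop (N : ℤ) (D : ℤ → K) (i : ℤ) : SuperSpace K → SuperSpace K := fun v =>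
  hb K • dXi K i v
    + (cs K (2 : K)⁻¹ * hb K) • (∑ᶠ n : ℤ, nb K n (i + N - 2 - n) v)
    + (cs K (2 : K)⁻¹ * hb K) •
        (∑ᶠ j : ℤ, (((2 * j + i + N - 1 : ℤ) : R K) * cs K (2 : K)⁻¹) •
          nf K s2 (-j) (i + N - 1 + j) v)
    + (if i = 1 - N then (cs K (8 : K)⁻¹ * hb K) • v else 0)
    + (if i ≤ N + 1 then (hb K * cs K (D i)) • v else 0)

/-- `F_{n+1/2} = ℏ ∂_{θ^{n+1/2+1/2}} + ℏ Σ_{s∈ℤ+1/2} b_s ψ_{n+1/2+N−s}`, the half-integer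
sum being parametrised by `s = m + 1/2`, `m ∈ ℤ`. -/
def Fop (N : ℤ) (n : ℤ) : SuperSpace K → SuperSpace K := fun v =>
  hb K • dTi K (n + 1) v + hb K • (∑ᶠ m : ℤ, bos K m (fer K s2 (n + N - m) v))

section AbstractModes

/-- Abstract boson/fermion modes acting on a module. -/
structure Modes (A V : Type*) [CommRing A] [AddCommGroup V] [Module A V] where
  h : A
  h2 : 2 * h = 1
  b : ℤ → V →ₗ[A] V
  f : ℤ → V →ₗ[A] V
  bb : ∀ n m v, b n (b m v) - b m (b n v) =
    if n + m + 1 = 0 then (((2 * n + 1 : ℤ) : A) * h) • v else 0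
  ff : ∀ n m v, f n (f m v) + f m (f n v) = if n + m = 0 then v else 0
  bf : ∀ n m v, b n (f m v) = f m (b n v)
  lfb : ∀ v, ∃ B : ℤ, ∀ n, B ≤ n → b n v = 0
  lff : ∀ v, ∃ B : ℤ, ∀ n, B ≤ n → f n v = 0

namespace Modes

variable {A V : Type*} [CommRing A] [AddCommGroup V] [Module A V]

/-- Local finiteness. -/
def LF (g : ℤ → V →ₗ[A] V) : Prop := ∀ v, (Function.support fun n => g n v).Finite

lemma LF_of {g : ℤ → V →ₗ[A] V} (h : ∀ v, ∃ B C : ℤ, ∀ n, (B ≤ n ∨ n ≤ C) → g n v = 0) :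
    LF g := by
  intro v
  obtain ⟨B, C, hB⟩ := h v
  refine (Set.finite_Icc C B).subset ?_
  intro n hn
  simp only [Function.mem_support] at hn
  by_contra hc
  simp only [Set.mem_Icc, not_and_or, not_le] at hc
  exact hn (hB n (by omega))

/-- Sum of a locally finite family. -/
def lsum (g : ℤ → V →ₗ[A] V) (hg : LF g) : V →ₗ[A] V where
  toFun v := ∑ᶠ n, g n v
  map_add' v w := by
    simp only [map_add]
    exact finsum_add_distrib (hg v) (hg w)
  map_smul' c v := by
    simp only [map_smul, RingHom.id_apply]
    exact (smul_finsum' c (hg v)).symm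

lemma lsum_apply (g : ℤ → V →ₗ[A] V) (hg : LF g) (v : V) : lsum g hg v = ∑ᶠ n, g n v := rfl

/-- Commutator of a locally finite sum with an operator. -/
lemma lsum_comm (g : ℤ → V →ₗ[A] V) (hg : LF g) (T : V →ₗ[A] V) (v : V) :
    lsum g hg (T v) - T (lsum g hg v) = ∑ᶠ n, (g n (T v) - T (g n v)) := by
  have h1 : T (lsum g hg v) = ∑ᶠ n, T (g n v) := T.toAddMonoidHom.map_finsum (hg v)
  rw [h1, lsum_apply, finsum_sub_distrib (hg (T v))]
  exact (hg v).subset (fun n hn h0 => hn (by simp only [h0, map_zero]))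

lemma lsum_anticomm (g : ℤ → V →ₗ[A] V) (hg : LF g) (T : V →ₗ[A] V) (v : V) :
    lsum g hg (T v) + T (lsum g hg v) = ∑ᶠ n, (g n (T v) + T (g n v)) := by
  have h1 : T (lsum g hg v) = ∑ᶠ n, T (g n v) := T.toAddMonoidHom.map_finsum (hg v)
  rw [h1, lsum_apply, finsum_add_distrib (hg (T v))]
  exact (hg v).subset (fun n hn h0 => hn (by simp only [h0, map_zero]))

lemma finite_ite (P : ℤ → Prop) [DecidablePred P] (c : ℤ) (hP : ∀ n, P n ↔ n = c) (x : ℤ → V) :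
    (Function.support fun n => if P n then x n else 0).Finite := by
  refine (Set.finite_singleton c).subset ?_
  intro n hn
  by_contra h
  exact hn (if_neg (fun hp => h ((hP n).1 hp)))

lemma finsum_ite (P : ℤ → Prop) [DecidablePred P] (c : ℤ) (hP : ∀ n, P n ↔ n = c) (x : ℤ → V) :
    ∑ᶠ n, (if P n then x n else 0) = x c := by
  rw [finsum_eq_single _ c]
  · exact if_pos ((hP c).2 rfl)
  · intro n hn
    exact if_neg (fun hp => hn ((hP n).1 hp))

variable (M : Modes A V)

/-- normally ordered bosons -/
def nb (n m : ℤ) : V →ₗ[A] V := if n ≤ m then M.b n ∘ₗ M.b m else M.b m ∘ₗ M.b n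

/-- normally ordered fermions -/
def nf (n m : ℤ) : V →ₗ[A] V := if n ≤ m then M.f n ∘ₗ M.f m else -(M.f m ∘ₗ M.f n)

lemma bb' (n m : ℤ) (v : V) : M.b n (M.b m v) = M.b m (M.b n v) +
    if n + m + 1 = 0 then (((2 * n + 1 : ℤ) : A) * M.h) • v else 0 := by
  rw [← M.bb]; abel

lemma ff' (n m : ℤ) (v : V) : M.f n (M.f m v) = - M.f m (M.f n v) +
    if n + m = 0 then v else 0 := by
  rw [← M.ff]; abel

lemma nb_eq (n m : ℤ) (v : V) : M.b n (M.b m v) = M.nb n m v +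
    if n + m + 1 = 0 ∧ m < n then (((2 * n + 1 : ℤ) : A) * M.h) • v else 0 := by
  unfold nb
  by_cases h : n ≤ m
  · simp [h, not_lt.2 h]
  · simp [h, not_le.1 h]
    have := M.bb' n m v
    push_cast at this
    exact this

lemma nf_eq (n m : ℤ) (v : V) : M.f n (M.f m v) = M.nf n m v +
    if n + m = 0 ∧ m < n then v else 0 := by
  unfold nf
  by_cases h : n ≤ m
  · simp [h, not_lt.2 h]
  · simp [h, not_le.1 h]
    exact M.ff' n m v

lemma nf_antisymm (n m : ℤ) (v : V) : M.nf n m v + M.nf m n v =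
    if n = 0 ∧ m = 0 then v else 0 := by
  unfold nf
  rcases lt_trichotomy n m with h | h | h
  · have h1 : ¬ (n = 0 ∧ m = 0) := by omega
    simp [h.le, not_le.2 h, h1]
  · subst h
    have := M.ff n n v
    simp only [le_refl, if_true, LinearMap.comp_apply, this, and_self]
    congr 1
    exact propext (by omega)
  · have h1 : ¬ (n = 0 ∧ m = 0) := by omega
    simp [h.le, not_le.2 h, h1]

lemma LF_nb (m : ℤ) : LF (fun n => M.nb n (m - n)) := by
  apply LF_of
  intro v
  obtain ⟨B, hB⟩ := M.lfb v
  refine ⟨max B m + |m| , -(max B m + |m|), ?_⟩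
  intro n hn
  have h1 := le_max_left B m
  have h2 := le_max_right B m
  have h3 := le_abs_self m
  have h4 := neg_abs_le m
  unfold nb
  split_ifs with hc
  · rw [LinearMap.comp_apply, hB _ (by omega), map_zero]
  · rw [LinearMap.comp_apply, hB _ (by omega), map_zero]

lemma LF_nf (m : ℤ) (c : ℤ → A) : LF (fun n => c n • M.nf (-n) (m + n)) := by
  apply LF_of
  intro v
  obtain ⟨B, hB⟩ := M.lff v
  refine ⟨max B m + |m| , -(max B m + |m|), ?_⟩
  intro n hn
  have h1 := le_max_left B m
  have h2 := le_max_right B m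
  have h3 := le_abs_self m
  have h4 := neg_abs_le m
  unfold nf
  split_ifs with hc
  · rw [LinearMap.smul_apply, LinearMap.comp_apply, hB _ (by omega), map_zero, smul_zero]
  · rw [LinearMap.smul_apply, LinearMap.neg_apply, LinearMap.comp_apply, hB _ (by omega), map_zero,
      neg_zero, smul_zero]

lemma LF_G (a : ℤ) (c : ℤ → A) : LF (fun n => c n • (M.b n ∘ₗ M.f (a - n))) := by
  apply LF_of
  intro v
  obtain ⟨B, hB⟩ := M.lff v
  obtain ⟨C, hC⟩ := M.lfb v
  refine ⟨C, a - B, ?_⟩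
  intro n hn
  rw [LinearMap.smul_apply, LinearMap.comp_apply]
  rcases hn with hn | hn
  · rw [M.bf, hC n hn, map_zero, smul_zero]
  · rw [hB _ (by omega), map_zero, smul_zero]

/-- Supercurrent `G_{a+1/2}`. -/
def G (a : ℤ) : V →ₗ[A] V :=
  lsum (fun n => M.b n ∘ₗ M.f (a - n)) (by simpa using M.LF_G a (fun _ => 1))

/-- bosonic part -/
def LB (m : ℤ) : V →ₗ[A] V := lsum (fun n => M.nb n (m - 1 - n)) (M.LF_nb (m - 1))

/-- fermionic part -/
def LFe (m : ℤ) : V →ₗ[A] V :=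
  lsum (fun j => (((2 * j + m : ℤ) : A) * M.h) • M.nf (-j) (m + j)) (M.LF_nf m _)

/-- Virasoro mode. -/
def L (m : ℤ) : V →ₗ[A] V :=
  M.h • M.LB m + M.h • M.LFe m + if m = 0 then M.h ^ 3 • LinearMap.id else 0

lemma nb_b (n m r : ℤ) (v : V) : M.nb n m (M.b r v) - M.b r (M.nb n m v) =
    (if n + r + 1 = 0 then (((2 * n + 1 : ℤ) : A) * M.h) • M.b m v else 0) +
    (if m + r + 1 = 0 then (((2 * m + 1 : ℤ) : A) * M.h) • M.b n v else 0) := by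
  have key : ∀ n m : ℤ, M.b n (M.b m (M.b r v)) - M.b r (M.b n (M.b m v)) =
      (if n + r + 1 = 0 then (((2 * n + 1 : ℤ) : A) * M.h) • M.b m v else 0) +
      (if m + r + 1 = 0 then (((2 * m + 1 : ℤ) : A) * M.h) • M.b n v else 0) := by
    intro n m
    have e1 := M.bb m r v
    have e2 := M.bb n r (M.b m v)
    have e3 : M.b n (M.b m (M.b r v)) - M.b n (M.b r (M.b m v)) =
      if m + r + 1 = 0 then (((2 * m + 1 : ℤ) : A) * M.h) • M.b n v else 0 := by
      rw [← map_sub, e1]; split_ifs <;> simp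
    rw [← e3, ← e2]; abel
  unfold nb
  by_cases h : n ≤ m
  · rw [if_pos h]
    exact key n m
  · rw [if_neg h, add_comm]
    exact key m n

lemma nb_f (n m r : ℤ) (v : V) : M.nb n m (M.f r v) - M.f r (M.nb n m v) = 0 := by
  unfold nb
  split_ifs <;> simp [M.bf]

lemma nf_b (n m r : ℤ) (v : V) : M.nf n m (M.b r v) - M.b r (M.nf n m v) = 0 := by
  unfold nf
  split_ifs <;> simp [M.bf]

lemma nf_f (n m r : ℤ) (v : V) : M.nf n m (M.f r v) - M.f r (M.nf n m v) =
    (if m + r = 0 then M.f n v else 0) - (if n + r = 0 then M.f m v else 0) := by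
  have key : ∀ n m : ℤ, M.f n (M.f m (M.f r v)) - M.f r (M.f n (M.f m v)) =
    (if m + r = 0 then M.f n v else 0) - (if n + r = 0 then M.f m v else 0) := by
    intro n m
    have e1 := M.ff m r v
    have e2 := M.ff n r (M.f m v)
    have e3 : M.f n (M.f m (M.f r v)) + M.f n (M.f r (M.f m v)) =
      if m + r = 0 then M.f n v else 0 := by
      rw [← map_add, e1]; split_ifs <;> simp
    rw [← e3, ← e2]; abel
  unfold nf
  by_cases h : n ≤ m
  · rw [if_pos h]
    exact key n m
  · rw [if_neg h]
    have k := congrArg Neg.neg (key m n)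
    rw [neg_sub, neg_sub] at k
    simp only [LinearMap.comp_apply, LinearMap.neg_apply, map_neg]
    rw [← k]
    abel

lemma L_b (m r : ℤ) (v : V) :
    M.L m (M.b r v) - M.b r (M.L m v) = -((((2 * r + 1 : ℤ) : A) * M.h) • M.b (m + r) v) := by
  have h1 : M.LB m (M.b r v) - M.b r (M.LB m v) =
      -((((2 * r + 1 : ℤ) : A)) • M.b (m + r) v) := by
    unfold LB
    rw [lsum_comm]
    simp only [nb_b]
    rw [finsum_add_distrib, finsum_ite _ (-r-1), finsum_ite _ (m + r)]
    · rw [show m - 1 - (-r - 1) = m + r by ring, ← add_smul, ← neg_smul]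
      congr 1
      push_cast
      linear_combination (-2 * (r:A) - 1) * M.h2
    · intro n; omega
    · intro n; omega
    · exact finite_ite _ (-r-1) (by intro n; omega) _
    · exact finite_ite _ (m+r) (by intro n; omega) _
  have h2 : M.LFe m (M.b r v) - M.b r (M.LFe m v) = 0 := by
    unfold LFe
    rw [lsum_comm]
    have : ∀ n : ℤ, ((((2 * n + m : ℤ) : A) * M.h) • M.nf (-n) (m + n)) (M.b r v) -
      M.b r (((((2 * n + m : ℤ) : A) * M.h) • M.nf (-n) (m + n)) v) = 0 := by
      intro n
      rw [LinearMap.smul_apply, LinearMap.smul_apply, map_smul, ← smul_sub, nf_b, smul_zero]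
    simp only [this, finsum_zero]
  have h3 : M.L m (M.b r v) - M.b r (M.L m v) = M.h • (M.LB m (M.b r v) - M.b r (M.LB m v)) +
      M.h • (M.LFe m (M.b r v) - M.b r (M.LFe m v)) := by
    unfold L
    split_ifs <;> simp <;> module
  rw [h3, h1, h2]
  module

lemma L_f (m r : ℤ) (v : V) :
    M.L m (M.f r v) - M.f r (M.L m v) = -((((2 * r + m : ℤ) : A) * M.h) • M.f (m + r) v) := by
  have h1 : M.LB m (M.f r v) - M.f r (M.LB m v) = 0 := by
    unfold LB
    rw [lsum_comm]
    simp only [nb_f, finsum_zero]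
  have h2 : M.LFe m (M.f r v) - M.f r (M.LFe m v) =
      -((((2 * r + m : ℤ) : A)) • M.f (m + r) v) := by
    unfold LFe
    rw [lsum_comm]
    have : ∀ n : ℤ, ((((2 * n + m : ℤ) : A) * M.h) • M.nf (-n) (m + n)) (M.f r v) -
      M.f r (((((2 * n + m : ℤ) : A) * M.h) • M.nf (-n) (m + n)) v) =
      (if m + n + r = 0 then (((2 * n + m : ℤ) : A) * M.h) • M.f (-n) v else 0) -
      (if -n + r = 0 then (((2 * n + m : ℤ) : A) * M.h) • M.f (m + n) v else 0) := by
      intro n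
      rw [LinearMap.smul_apply, LinearMap.smul_apply, map_smul, ← smul_sub, nf_f, smul_sub,
        smul_ite, smul_ite, smul_zero]
    simp only [this]
    rw [finsum_sub_distrib, finsum_ite _ (-r-m), finsum_ite _ r]
    · rw [show -(-r - m) = m + r by ring, ← sub_smul, ← neg_smul]
      congr 1
      push_cast
      linear_combination (-2 * (r:A) - m) * M.h2
    · intro n; omega
    · intro n; omega
    · exact finite_ite _ (-r-m) (by intro n; omega) _
    · exact finite_ite _ r (by intro n; omega) _
  have h3 : M.L m (M.f r v) - M.f r (M.L m v) = M.h • (M.LB m (M.f r v) - M.f r (M.LB m v)) +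
      M.h • (M.LFe m (M.f r v) - M.f r (M.LFe m v)) := by
    unfold L
    split_ifs <;> simp <;> module
  rw [h3, h1, h2]
  module

lemma G_b (a m : ℤ) (v : V) :
    M.G a (M.b m v) - M.b m (M.G a v) = -((((2 * m + 1 : ℤ) : A) * M.h) • M.f (a + m + 1) v) := by
  unfold G
  rw [lsum_comm]
  have : ∀ n : ℤ, (M.b n ∘ₗ M.f (a - n)) (M.b m v) - M.b m ((M.b n ∘ₗ M.f (a - n)) v) =
    if n + m + 1 = 0 then (((2 * n + 1 : ℤ) : A) * M.h) • M.f (a - n) v else 0 := by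
    intro n
    rw [LinearMap.comp_apply, LinearMap.comp_apply, ← M.bf, M.bb]
  simp only [this]
  rw [finsum_ite _ (-m-1)]
  · rw [← neg_smul, show a - (-m-1) = a + m + 1 by ring]
    congr 1
    push_cast; ring
  · intro n; omega

lemma G_f (a m : ℤ) (v : V) :
    M.G a (M.f m v) + M.f m (M.G a v) = M.b (a + m) v := by
  unfold G
  rw [lsum_anticomm]
  have : ∀ n : ℤ, (M.b n ∘ₗ M.f (a - n)) (M.f m v) + M.f m ((M.b n ∘ₗ M.f (a - n)) v) =
    if a - n + m = 0 then M.b n v else 0 := by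
    intro n
    rw [LinearMap.comp_apply, LinearMap.comp_apply, ← M.bf, ← map_add, M.ff]
    split_ifs <;> simp
  simp only [this]
  rw [finsum_ite _ (a+m)]
  intro n; omega

lemma L_G (m a : ℤ) (v : V) :
    M.L m (M.G a v) - M.G a (M.L m v) = (((m - 2 * a - 1 : ℤ) : A) * M.h) • M.G (m + a) v := by
  rw [← neg_sub]
  conv_lhs => unfold G
  rw [lsum_comm]
  have : ∀ n : ℤ, (M.b n ∘ₗ M.f (a - n)) (M.L m v) - M.L m ((M.b n ∘ₗ M.f (a - n)) v) =
      (((2 * n + 1 : ℤ) : A) * M.h) • M.b (m + n) (M.f (m + a - (m + n)) v) +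
      (((2 * (a - n) + m : ℤ) : A) * M.h) • M.b n (M.f (m + a - n) v) := by
    intro n
    rw [LinearMap.comp_apply, LinearMap.comp_apply]
    have e1 := M.L_b m n (M.f (a - n) v)
    have e2 := congrArg (M.b n) (M.L_f m (a - n) v)
    rw [map_sub, map_neg, map_smul] at e2
    rw [show m + a - (m + n) = a - n by ring, show m + a - n = m + (a - n) by ring]
    have e3 := congrArg Neg.neg (congrArg₂ (· + ·) e1 e2)
    simp only [neg_add, neg_neg] at e3
    rw [← e3]; abel
  simp only [this]
  have F1 := M.LF_G (m + a) (fun n => (((2 * (n - m) + 1 : ℤ) : A) * M.h)) v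
  have F2 := M.LF_G (m + a) (fun n => (((2 * (a - n) + m : ℤ) : A) * M.h)) v
  simp only [LinearMap.smul_apply, LinearMap.comp_apply] at F1 F2
  have R1 := finsum_comp_equiv (f := fun n : ℤ =>
    (((2 * (n - m) + 1 : ℤ) : A) * M.h) • M.b n (M.f (m + a - n) v)) (Equiv.addLeft m)
  simp only [Equiv.coe_addLeft, add_sub_cancel_left] at R1
  have F1' : (Function.support fun n : ℤ =>
      (((2 * n + 1 : ℤ) : A) * M.h) • M.b (m + n) (M.f (m + a - (m + n)) v)).Finite := by
    have := F1.preimage (f := fun n => m + n) (fun x _ y _ h => by simpa using h)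
    refine this.subset ?_
    intro n hn
    simpa using hn
  rw [finsum_add_distrib F1' F2]
  have R1' : ∑ᶠ n : ℤ, (((2 * n + 1 : ℤ) : A) * M.h) • M.b (m + n) (M.f (m + a - (m + n)) v) =
    ∑ᶠ n : ℤ, (((2 * (n - m) + 1 : ℤ) : A) * M.h) • M.b n (M.f (m + a - n) v) := by
    rw [← R1]
  rw [R1', ← finsum_add_distrib F1 F2]
  have F3 := M.LF_G (m + a) (fun n => 1) v
  simp only [LinearMap.smul_apply, LinearMap.comp_apply, one_smul] at F3
  have e4 : M.G (m + a) v = ∑ᶠ n, M.b n (M.f (m + a - n) v) := rfl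
  rw [e4, smul_finsum' _ F3, ← finsum_neg_distrib]
  refine finsum_congr fun n => ?_
  rw [← add_smul, ← neg_smul]
  congr 1
  push_cast; ring

lemma nf_sum (m : ℤ) (v : V) : ∑ᶠ j : ℤ, M.nf (-j) (m + j) v = if m = 0 then M.h • v else 0 := by
  have F := M.LF_nf m (fun _ => 1) v
  simp only [one_smul] at F
  have R1 := finsum_comp_equiv (f := fun j : ℤ => M.nf (-j) (m + j) v) (Equiv.subLeft (-m))
  have F1 : (Function.support fun j : ℤ => M.nf (-(-m - j)) (m + (-m - j)) v).Finite := by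
    have := F.preimage (f := fun n => -m - n) (fun x _ y _ h => by simpa using h)
    exact this
  have S : (2 : A) • ∑ᶠ j : ℤ, M.nf (-j) (m + j) v = if m = 0 then v else 0 := by
    rw [two_smul]
    nth_rewrite 2 [← R1]
    simp only [Equiv.subLeft_apply]
    rw [← finsum_add_distrib F F1]
    by_cases hm : m = 0
    · rw [if_pos hm]
      refine Eq.trans ?_ (finsum_ite (fun j : ℤ => j = 0) 0 (by simp) (fun _ => v))
      refine finsum_congr fun n => ?_
      rw [show -(-m - n) = m + n by ring, show m + (-m - n) = - n by ring, nf_antisymm]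
      congr 1
      exact propext (by omega)
    · rw [if_neg hm]
      rw [← finsum_zero (α := ℤ)]
      refine finsum_congr fun n => ?_
      rw [show -(-m - n) = m + n by ring, show m + (-m - n) = - n by ring, nf_antisymm]
      rw [if_neg (by omega)]
  have := congrArg (fun w => M.h • w) S
  simp only [smul_smul, mul_comm M.h 2, M.h2, one_smul] at this
  rw [this]
  split_ifs <;> simp

lemma const_sum (a c : ℤ) (hac : a + c + 1 ≠ 0 ∨ a = 0 ∨ a = -1) (v : V) (x : ℤ → V)
    (hx : ∀ m, x m = (if m + (a + c - m) + 1 = 0 ∧ a + c - m < m then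
        (((2 * m + 1 : ℤ) : A) * M.h) • v else 0) - (((2 * m + 1 : ℤ) : A) * M.h) •
        (if (a + m + 1) + (c - m) = 0 ∧ c - m < a + m + 1 then v else 0)) :
    ∀ m, x m = if m = 0 then (if a + c + 1 = 0 ∧ a = -1 then M.h • v else 0) else 0 := by
  intro m
  rw [hx]
  by_cases h0 : a + c + 1 = 0
  · rcases hac with h | h | h
    · exact absurd h0 h
    · subst h
      obtain rfl : c = -1 := by omega
      by_cases hm : 0 ≤ m
      · rw [if_pos (by omega), if_pos (by omega)]
        simp
      · rw [if_neg (by omega), if_neg (by omega)]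
        simp
    · subst h
      obtain rfl : c = 0 := by omega
      rcases lt_trichotomy m 0 with hm | hm | hm
      · rw [if_neg (by omega), if_neg (by omega), if_neg (by omega)]
        simp
      · subst hm
        simp
      · rw [if_pos (by omega), if_pos (by omega), if_neg (by omega)]
        simp
  · rw [if_neg (by omega), if_neg (by omega)]
    simp [h0]

lemma G_G (a c : ℤ) (hac : a + c + 1 ≠ 0 ∨ a = 0 ∨ a = -1) (v : V) :
    M.G a (M.G c v) + M.G c (M.G a v) = (2 : A) • M.L (a + c + 1) v := by
  rw [add_comm]
  conv_lhs => rw [show M.G c = lsum _ _ from rfl]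
  rw [lsum_anticomm]
  set x : ℤ → V := fun m => (if m + (a + c - m) + 1 = 0 ∧ a + c - m < m then
        (((2 * m + 1 : ℤ) : A) * M.h) • v else 0) - (((2 * m + 1 : ℤ) : A) * M.h) •
        (if (a + m + 1) + (c - m) = 0 ∧ c - m < a + m + 1 then v else 0) with hxdef
  have hx := M.const_sum a c hac v x (fun m => rfl)
  have T : ∀ m : ℤ, (M.b m ∘ₗ M.f (c - m)) (M.G a v) + M.G a ((M.b m ∘ₗ M.f (c - m)) v) =
      (M.nb m (a + c + 1 - 1 - m) v + 
      (-(((2 * m + 1 : ℤ) : A) * M.h)) • M.nf (a + m + 1) (c - m) v) + x m := by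
    intro m
    rw [LinearMap.comp_apply, LinearMap.comp_apply]
    have e1 := M.G_b a m (M.f (c - m) v)
    have e2 := congrArg (M.b m) (M.G_f a (c - m) v)
    rw [map_add, show a + (c - m) = a + c - m by ring, nb_eq] at e2
    rw [nf_eq, smul_add] at e1
    rw [hxdef]
    rw [show a + c + 1 - 1 - m = a + c - m by ring]
    have e3 := congrArg₂ (· + ·) e1 e2
    have e4 : M.b m (M.f (c - m) (M.G a v)) + M.G a (M.b m (M.f (c - m) v)) =
      M.G a (M.b m (M.f (c - m) v)) - M.b m (M.G a (M.f (c - m) v)) +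
      (M.b m (M.G a (M.f (c - m) v)) + M.b m (M.f (c - m) (M.G a v))) := by abel
    rw [e4, e3, neg_smul]
    beta_reduce
    abel
  simp only [T]
  have F1 := M.LF_nb (a + c + 1 - 1) v
  have F2 := M.LF_nf (a + c + 1) (fun j => (((2 * (j + a) + 1 : ℤ) : A) * M.h)) v
  simp only [LinearMap.smul_apply] at F2
  have F2' : (Function.support fun m : ℤ =>
      (-(((2 * m + 1 : ℤ) : A) * M.h)) • M.nf (a + m + 1) (c - m) v).Finite := by
    have := F2.preimage (f := fun n => (-a-1) - n) (fun x _ y _ h => by simpa using h)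
    refine this.subset ?_
    intro n hn
    simp only [Set.mem_preimage, Function.mem_support] at hn ⊢
    convert hn using 2
    · push_cast; ring
    · congr 2
      · ring
      · ring
  have R2 : ∑ᶠ m : ℤ, (-(((2 * m + 1 : ℤ) : A) * M.h)) • M.nf (a + m + 1) (c - m) v =
      ∑ᶠ j : ℤ, (((2 * (j + a) + 1 : ℤ) : A) * M.h) • M.nf (-j) (a + c + 1 + j) v := by
    rw [← finsum_comp_equiv (f := fun j : ℤ =>
      (((2 * (j + a) + 1 : ℤ) : A) * M.h) • M.nf (-j) (a + c + 1 + j) v) (Equiv.subLeft (-a-1))]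
    refine finsum_congr fun n => ?_
    simp only [Equiv.subLeft_apply]
    rw [show -(-a-1-n) = a + n + 1 by ring, show a + c + 1 + (-a-1-n) = c - n by ring]
    congr 1
    push_cast; ring
  have F3 : (Function.support x).Finite := by
    rw [show x = _ from funext hx]
    exact finite_ite _ 0 (by simp) _
  have F12 : (Function.support fun m : ℤ => M.nb m (a + c + 1 - 1 - m) v + 
      (-(((2 * m + 1 : ℤ) : A) * M.h)) • M.nf (a + m + 1) (c - m) v).Finite :=
    (F1.union F2').subset (Function.support_add _ _)
  rw [finsum_add_distrib F12 F3, finsum_add_distrib F1 F2', R2, finsum_congr hx,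
    finsum_ite _ 0 (by simp)]
  have F4 := M.LF_nf (a + c + 1) (fun j => (((2 * j + (a + c + 1) : ℤ) : A) * M.h)) v
  have F5 := M.LF_nf (a + c + 1) (fun j => 1) v
  have F6 := M.LF_nf (a + c + 1) (fun j => (((a - c : ℤ) : A) * M.h)) v
  simp only [LinearMap.smul_apply, one_smul] at F4 F5 F6
  have S : ∑ᶠ j : ℤ, (((2 * (j + a) + 1 : ℤ) : A) * M.h) • M.nf (-j) (a + c + 1 + j) v =
      M.LFe (a + c + 1) v + (((a - c : ℤ) : A) * M.h) •
        (if a + c + 1 = 0 then M.h • v else 0) := by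
    rw [← nf_sum, smul_finsum' _ F5]
    unfold LFe
    rw [lsum_apply]
    simp only [LinearMap.smul_apply]
    rw [← finsum_add_distrib F4 F6]
    refine finsum_congr fun n => ?_
    rw [← add_smul]
    congr 1
    push_cast; ring
  rw [S]
  have E : ∑ᶠ m : ℤ, M.nb m (a + c + 1 - 1 - m) v = M.LB (a + c + 1) v := rfl
  rw [E]
  have W : (2 : A) • M.L (a + c + 1) v = M.LB (a + c + 1) v + M.LFe (a + c + 1) v +
      (if a + c + 1 = 0 then (M.h ^ 2) • v else 0) := by
    unfold L
    simp only [LinearMap.add_apply, LinearMap.smul_apply, smul_add, smul_smul, M.h2, one_smul]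
    congr 1
    split_ifs
    · simp only [LinearMap.smul_apply, LinearMap.id_apply, smul_smul]
      congr 1
      linear_combination M.h ^ 2 * M.h2
    · simp
  rw [W, ← add_assoc, add_assoc (_ + _)]
  congr 1
  by_cases h0 : a + c + 1 = 0
  · rcases hac with h | h | h
    · exact absurd h0 h
    · subst h
      obtain rfl : c = -1 := by omega
      simp [smul_smul, sq]
    · subst h
      obtain rfl : c = 0 := by omega
      simp [smul_smul]
      rw [← neg_smul, ← add_smul]
      congr 1
      linear_combination (-M.h) * M.h2
  · simp [h0]

lemma L_L (m n : ℤ) (hm : -1 ≤ m) (hn : -1 ≤ n) (v : V) :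
    M.L m (M.L n v) - M.L n (M.L m v) = ((m - n : ℤ) : A) • M.L (m + n) v := by
  have g := fun w => M.G_G (-1) n (by omega) w
  simp only [show -1 + n + 1 = n by ring] at g
  have key : (2 : A) • (M.L m (M.L n v) - M.L n (M.L m v)) =
      (2 : A) • (((m - n : ℤ) : A) • M.L (m + n) v) := by
    rw [smul_sub, ← map_smul, ← g, ← g, map_add]
    have e1 := M.L_G m (-1) (M.G n v)
    have e2 := congrArg (M.G (-1)) (M.L_G m n v)
    have e3 := M.L_G m n (M.G (-1) v)
    have e4 := congrArg (M.G n) (M.L_G m (-1) v)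
    rw [map_sub, map_smul] at e2 e4
    have s1 : M.L m (M.G (-1) (M.G n v)) + M.L m (M.G n (M.G (-1) v)) -
      (M.G (-1) (M.G n (M.L m v)) + M.G n (M.G (-1) (M.L m v))) =
      (((m - 2 * (-1) - 1 : ℤ) : A) * M.h) •
        (M.G (m + -1) (M.G n v) + M.G n (M.G (m + -1) v)) +
      (((m - 2 * n - 1 : ℤ) : A) * M.h) •
        (M.G (-1) (M.G (m + n) v) + M.G (m + n) (M.G (-1) v)) := by
      rw [smul_add, smul_add, ← e1, ← e2, ← e3, ← e4]
      abel
    rw [s1, M.G_G (-1) (m + n) (by omega), show -1 + (m + n) + 1 = m + n by ring]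
    by_cases h1 : m = -1
    · subst h1
      norm_num [smul_smul]
      congr 1
      linear_combination (-2 - 2 * (n : A)) * M.h2
    · rw [M.G_G (m + -1) n (by omega), show m + -1 + n + 1 = m + n by ring]
      simp only [smul_smul, ← add_smul]
      congr 1
      push_cast
      linear_combination 2 * ((m:A) - n) * M.h2
  have := congrArg (fun w => M.h • w) key
  simpa only [smul_smul, ← mul_assoc, mul_comm M.h 2, M.h2, one_smul, one_mul] using this

/-- Abstract version of `H_i`. -/
def Hh (t : A) (N : ℤ) (d : ℤ → A) (i : ℤ) : V →ₗ[A] V :=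
  (if 1 ≤ i then t • M.b (i - 1) else 0) + t ^ 2 • M.L (i + N - 1) +
    (if i ≤ N + 1 then (t ^ 2 * d i) • LinearMap.id else 0)

/-- Abstract version of `F_r`. -/
def Ff (t : A) (N : ℤ) (n : ℤ) : V →ₗ[A] V :=
  (if 0 ≤ n then t • M.f (n + 1) else 0) + t ^ 2 • M.G (n + N)

lemma Hh_apply (t : A) (N : ℤ) (d : ℤ → A) (i : ℤ) : ∃ e : A, ∀ v, 1 ≤ i →
    M.Hh t N d i v = t • M.b (i - 1) v + t ^ 2 • M.L (i + N - 1) v + e • v := by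
  unfold Hh
  by_cases h : i ≤ N + 1
  · refine ⟨t ^ 2 * d i, fun v hi => ?_⟩
    simp [h, hi]
  · refine ⟨0, fun v hi => ?_⟩
    simp [h, hi]

lemma Ff_apply (t : A) (N : ℤ) (n : ℤ) (hn : 0 ≤ n) (v : V) :
    M.Ff t N n v = t • M.f (n + 1) v + t ^ 2 • M.G (n + N) v := by
  unfold Ff
  simp [hn]

lemma HH (t : A) (N : ℤ) (hN : -1 ≤ N) (d : ℤ → A) (i j : ℤ) (hi : 1 ≤ i) (hj : 1 ≤ j) (v : V) :
    M.Hh t N d i (M.Hh t N d j v) - M.Hh t N d j (M.Hh t N d i v) =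
      (t ^ 2 * ((i - j : ℤ) : A)) • M.Hh t N d (i + j + N - 1) v := by
  by_cases hij : i = j
  · subst hij
    simp
  obtain ⟨ei, Hi⟩ := M.Hh_apply t N d i
  obtain ⟨ej, Hj⟩ := M.Hh_apply t N d j
  have Hk : M.Hh t N d (i + j + N - 1) v = t • M.b (i + j + N - 2) v +
      t ^ 2 • M.L (i + j + 2 * N - 2) v := by
    unfold Hh
    rw [if_pos (by omega), if_neg (by omega), show i + j + N - 1 - 1 = i + j + N - 2 by ring,
      show i + j + N - 1 + N - 1 = i + j + 2 * N - 2 by ring]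
    simp
  rw [Hk, Hi _ hi, Hi _ hi, Hj _ hj, Hj _ hj]
  have e1 := M.bb (i - 1) (j - 1) v
  rw [if_neg (by omega)] at e1
  have e2 := M.L_b (i + N - 1) (j - 1) v
  have e3 := M.L_b (j + N - 1) (i - 1) v
  have e4 := M.L_L (i + N - 1) (j + N - 1) (by omega) (by omega) v
  rw [show i + N - 1 + (j - 1) = i + j + N - 2 by ring] at e2
  rw [show j + N - 1 + (i - 1) = i + j + N - 2 by ring] at e3
  rw [show i + N - 1 + (j + N - 1) = i + j + 2 * N - 2 by ring] at e4
  simp only [map_add, map_smul]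
  push_cast at e2 e3 e4 ⊢
  linear_combination (norm := module) t ^ 2 • e1 + t ^ 3 • e2 - t ^ 3 • e3 + t ^ 4 • e4 +
    (t ^ 3 * (i - j : A)) • (M.h2 • M.b (i + j + N - 2) v)

lemma HF (t : A) (N : ℤ) (hN : -1 ≤ N) (d : ℤ → A) (i n : ℤ) (hi : 1 ≤ i) (hn : 0 ≤ n) (v : V) :
    M.Hh t N d i (M.Ff t N n v) - M.Ff t N n (M.Hh t N d i v) =
      (t ^ 2 * ((i - N - 2 - 2 * n : ℤ) : A) * M.h) • M.Ff t N (i + n + N - 1) v := by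
  obtain ⟨ei, Hi⟩ := M.Hh_apply t N d i
  have Hk : (((i - N - 2 - 2 * n : ℤ) : A)) • M.Ff t N (i + n + N - 1) v =
      (((i - N - 2 - 2 * n : ℤ) : A)) • (t • M.f (i + n + N) v +
      t ^ 2 • M.G (i + n + 2 * N - 1) v) := by
    by_cases hk : 0 ≤ i + n + N - 1
    · unfold Ff
      rw [if_pos (by omega), show i + n + N - 1 + 1 = i + n + N by ring,
        show i + n + N - 1 + N = i + n + 2 * N - 1 by ring]
      simp
    · rw [show i - N - 2 - 2 * n = 0 by omega]
      simp
  have Hk2 : (t ^ 2 * ((i - N - 2 - 2 * n : ℤ) : A) * M.h) • M.Ff t N (i + n + N - 1) v =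
      (t ^ 2 * M.h) • ((((i - N - 2 - 2 * n : ℤ) : A)) • M.Ff t N (i + n + N - 1) v) := by
    rw [smul_smul]; congr 1; ring
  rw [Hk2, Hk, Hi _ hi, Hi _ hi, M.Ff_apply _ _ _ hn, M.Ff_apply _ _ _ hn]
  have e1 := M.bf (i - 1) (n + 1) v
  have e2 := M.L_f (i + N - 1) (n + 1) v
  have e3 := M.G_b (n + N) (i - 1) v
  have e4 := M.L_G (i + N - 1) (n + N) v
  rw [show i + N - 1 + (n + 1) = i + n + N by ring] at e2
  rw [show n + N + (i - 1) + 1 = i + n + N by ring] at e3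
  rw [show i + N - 1 + (n + N) = i + n + 2 * N - 1 by ring] at e4
  simp only [map_add, map_smul]
  push_cast at e2 e3 e4 ⊢
  linear_combination (norm := module) t ^ 2 • e1 + t ^ 3 • e2 - t ^ 3 • e3 + t ^ 4 • e4

lemma FF (t : A) (N : ℤ) (hN : -1 ≤ N) (d : ℤ → A) (n m : ℤ) (hn : 0 ≤ n) (hm : 0 ≤ m) (v : V) :
    M.Ff t N n (M.Ff t N m v) + M.Ff t N m (M.Ff t N n v) =
      (2 * t ^ 2) • M.Hh t N d (n + m + N + 2) v := by
  have Hk : M.Hh t N d (n + m + N + 2) v = t • M.b (n + m + N + 1) v +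
      t ^ 2 • M.L (n + m + 2 * N + 1) v := by
    unfold Hh
    rw [if_pos (by omega), if_neg (by omega), show n + m + N + 2 - 1 = n + m + N + 1 by ring,
      show n + m + N + 2 + N - 1 = n + m + 2 * N + 1 by ring]
    simp
  rw [Hk, M.Ff_apply _ _ _ hn, M.Ff_apply _ _ _ hn, M.Ff_apply _ _ _ hm, M.Ff_apply _ _ _ hm]
  have e1 := M.ff (n + 1) (m + 1) v
  rw [if_neg (by omega)] at e1
  have e2 := M.G_f (n + N) (m + 1) v
  have e3 := M.G_f (m + N) (n + 1) v
  have e4 := M.G_G (n + N) (m + N) (by omega) v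
  rw [show n + N + (m + 1) = n + m + N + 1 by ring] at e2
  rw [show m + N + (n + 1) = n + m + N + 1 by ring] at e3
  rw [show n + N + (m + N) + 1 = n + m + 2 * N + 1 by ring] at e4
  simp only [map_add, map_smul]
  linear_combination (norm := module) t ^ 2 • e1 + t ^ 3 • e2 + t ^ 3 • e3 + t ^ 4 • e4

end Modes
end AbstractModes

section Oscillators

/-- Abstract oscillators. -/
structure Osc (A V : Type*) [CommRing A] [AddCommGroup V] [Module A V] where
  T : A
  U : A
  TU : T * U = 1
  h : A
  h2 : 2 * h = 1
  c : A
  c2 : 2 * c ^ 2 = 1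
  dx : ℕ+ → V →ₗ[A] V
  mx : ℕ+ → V →ₗ[A] V
  dt : ℕ → V →ₗ[A] V
  mt : ℕ → V →ₗ[A] V
  dxdx : ∀ a b v, dx a (dx b v) = dx b (dx a v)
  mxmx : ∀ a b v, mx a (mx b v) = mx b (mx a v)
  dxmx : ∀ a b v, dx a (mx b v) = mx b (dx a v) + if a = b then v else 0
  dtdt : ∀ a b v, dt a (dt b v) + dt b (dt a v) = 0
  mtmt : ∀ a b v, mt a (mt b v) + mt b (mt a v) = 0
  dtmt : ∀ a b v, dt a (mt b v) + mt b (dt a v) = if a = b then v else 0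
  dxdt : ∀ a b v, dx a (dt b v) = dt b (dx a v)
  dxmt : ∀ a b v, dx a (mt b v) = mt b (dx a v)
  mxdt : ∀ a b v, mx a (dt b v) = dt b (mx a v)
  mxmt : ∀ a b v, mx a (mt b v) = mt b (mx a v)
  dxfin : ∀ v, ∃ B : ℕ, ∀ a : ℕ+, B ≤ (a : ℕ) → dx a v = 0
  dtfin : ∀ v, ∃ B : ℕ, ∀ a : ℕ, B ≤ a → dt a v = 0

namespace Osc

variable {A V : Type*} [CommRing A] [AddCommGroup V] [Module A V] (O : Osc A V)

/-- A positive integer as an element of `ℕ+`. -/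
def pn (k : ℤ) (hk : 1 ≤ k) : ℕ+ := ⟨k.toNat, by omega⟩

lemma pn_val (k : ℤ) (hk : 1 ≤ k) : ((pn k hk : ℕ+) : ℕ) = k.toNat := rfl

lemma pn_inj (k l : ℤ) (hk : 1 ≤ k) (hl : 1 ≤ l) : pn k hk = pn l hl ↔ k = l := by
  rw [← PNat.coe_inj, pn_val, pn_val]
  omega

/-- boson modes -/
def bm (n : ℤ) : V →ₗ[A] V :=
  if h : 0 ≤ n then O.T • O.dx (pn (n + 1) (by omega))
  else ((((-2 * n - 1 : ℤ) : A) * O.h) * O.U) • O.mx (pn (-n) (by omega))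

/-- fermion modes -/
def fm (n : ℤ) : V →ₗ[A] V :=
  if 1 ≤ n then O.T • O.dt n.toNat
  else if n = 0 then (O.c * O.U) • (O.mt 0 + O.T ^ 2 • O.dt 0)
  else O.U • O.mt (-n).toNat

lemma bm_comm (n m : ℤ) (v : V) :
    O.bm n (O.bm m v) - O.bm m (O.bm n v) =
    if n + m + 1 = 0 then (((2 * n + 1 : ℤ) : A) * O.h) • v else 0 := by
  unfold bm
  have hT := O.TU
  by_cases hn : 0 ≤ n
  · by_cases hm : 0 ≤ m
    · rw [dif_pos hn, dif_pos hm, if_neg (by omega)]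
      simp only [LinearMap.smul_apply, map_smul]
      rw [O.dxdx, sub_self]
    · rw [dif_pos hn, dif_neg hm]
      simp only [LinearMap.smul_apply, map_smul]
      rw [O.dxmx]
      by_cases h : n + m + 1 = 0
      · obtain rfl : m = -n - 1 := by omega
        rw [if_pos (by rw [pn_inj]; omega), if_pos h]
        push_cast
        linear_combination (norm := module) ((2 * (n : A) + 1) * O.h) • (hT • v)
      · rw [if_neg (by rw [pn_inj]; omega), if_neg h]
        module
  · by_cases hm : 0 ≤ m
    · rw [dif_neg hn, dif_pos hm]
      simp only [LinearMap.smul_apply, map_smul]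
      rw [O.dxmx]
      by_cases h : n + m + 1 = 0
      · obtain rfl : m = -n - 1 := by omega
        rw [if_pos (by rw [pn_inj]; omega), if_pos h]
        push_cast
        linear_combination (norm := module) ((2 * (n : A) + 1) * O.h) • (hT • v)
      · rw [if_neg (by rw [pn_inj]; omega), if_neg h]
        module
    · rw [dif_neg hn, dif_neg hm, if_neg (by omega)]
      simp only [LinearMap.smul_apply, map_smul]
      rw [O.mxmx]
      module

lemma fm_comm (n m : ℤ) (v : V) :
    O.fm n (O.fm m v) + O.fm m (O.fm n v) = if n + m = 0 then v else 0 := by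
  have hT := O.TU
  have hs := O.c2
  have dtdt : ∀ a b v, O.dt a (O.dt b v) = - O.dt b (O.dt a v) :=
    fun a b v => eq_neg_of_add_eq_zero_left (O.dtdt a b v)
  have mtmt : ∀ a b v, O.mt a (O.mt b v) = - O.mt b (O.mt a v) :=
    fun a b v => eq_neg_of_add_eq_zero_left (O.mtmt a b v)
  have dtmt : ∀ a b v, O.dt a (O.mt b v) = - O.mt b (O.dt a v) + if a = b then v else 0 := by
    intro a b v
    rw [← O.dtmt]; abel
  have key : ∀ n m : ℤ, n ≤ m →
      O.fm n (O.fm m v) + O.fm m (O.fm n v) = if n + m = 0 then v else 0 := by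
    intro n m hnm
    unfold fm
    rcases lt_trichotomy n 0 with hn | hn | hn
    · rw [if_neg (show ¬ 1 ≤ n by omega), if_neg (show ¬ n = 0 by omega)]
      rcases lt_trichotomy m 0 with hm | hm | hm
      · rw [if_neg (show ¬ 1 ≤ m by omega), if_neg (show ¬ m = 0 by omega), if_neg (by omega)]
        simp only [LinearMap.smul_apply, map_smul]
        rw [mtmt]
        module
      · rw [if_neg (show ¬ 1 ≤ m by omega), if_pos hm, if_neg (by omega)]
        simp only [LinearMap.smul_apply, map_smul, LinearMap.add_apply, map_add, smul_add]
        rw [mtmt, dtmt, if_neg (by omega)]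
        module
      · rw [if_pos (show 1 ≤ m by omega)]
        simp only [LinearMap.smul_apply, map_smul]
        rw [dtmt]
        by_cases h : n + m = 0
        · rw [if_pos (by omega), if_pos h]
          linear_combination (norm := module) hT • v
        · rw [if_neg (by omega), if_neg h]
          module
    · rw [if_neg (show ¬ 1 ≤ n by omega), if_pos hn]
      rcases lt_trichotomy m 0 with hm | hm | hm
      · omega
      · rw [if_neg (show ¬ 1 ≤ m by omega), if_pos hm, if_pos (by omega)]
        simp only [LinearMap.smul_apply, map_smul, LinearMap.add_apply, map_add, smul_add]
        have e1 := O.mtmt 0 0 v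
        have e2 := O.dtdt 0 0 v
        have e3 := dtmt 0 0 v
        rw [if_pos rfl] at e3
        rw [e3]
        have hcu : 2 * O.c ^ 2 * (O.T * O.U) ^ 2 = 1 := by rw [hT, hs]; ring
        linear_combination (norm := module) hcu • v + (O.c * O.U) ^ 2 • e1 +
          ((O.c * O.U) ^ 2 * O.T ^ 4) • e2
      · rw [if_pos (show 1 ≤ m by omega), if_neg (by omega)]
        simp only [LinearMap.smul_apply, map_smul, LinearMap.add_apply, map_add, smul_add]
        rw [dtmt, dtdt m.toNat 0, if_neg (by omega)]
        module
    · rw [if_pos (show 1 ≤ n by omega), if_pos (show 1 ≤ m by omega), if_neg (by omega)]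
      simp only [LinearMap.smul_apply, map_smul]
      rw [dtdt]
      module
  rcases le_total n m with h | h
  · exact key n m h
  · rw [add_comm, key m n h, add_comm]

lemma bm_fm (n m : ℤ) (v : V) : O.bm n (O.fm m v) = O.fm m (O.bm n v) := by
  unfold bm fm
  split_ifs
  all_goals
    simp only [LinearMap.smul_apply, map_smul, LinearMap.add_apply, map_add, O.dxdt, O.dxmt,
      O.mxdt, O.mxmt]
    try module

/-- The modes built from oscillators. -/
def toModes : Modes A V where
  h := O.h
  h2 := O.h2
  b := O.bm
  f := O.fm
  bb := O.bm_comm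
  ff := O.fm_comm
  bf := O.bm_fm
  lfb v := by
    obtain ⟨B, hB⟩ := O.dxfin v
    refine ⟨B, fun n hn => ?_⟩
    unfold bm
    rw [dif_pos (by omega), LinearMap.smul_apply, hB _ (by rw [pn_val]; omega), smul_zero]
  lff v := by
    obtain ⟨B, hB⟩ := O.dtfin v
    refine ⟨B + 1, fun n hn => ?_⟩
    unfold fm
    rw [if_pos (by omega), LinearMap.smul_apply, hB _ (by omega), smul_zero]

end Osc
end Oscillators


section Concrete

lemma aux_pderiv_comm (a b : ℕ+) (p : Pev K) :
    MvPolynomial.pderiv a (MvPolynomial.pderiv b p) =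
      MvPolynomial.pderiv b (MvPolynomial.pderiv a p) := by
  have h : ⁅(MvPolynomial.pderiv a : Derivation (R K) (Pev K) (Pev K)),
      (MvPolynomial.pderiv b : Derivation (R K) (Pev K) (Pev K))⁆ = 0 := by
    apply MvPolynomial.derivation_ext
    intro i
    rw [Derivation.commutator_apply]
    simp only [MvPolynomial.pderiv_X, Pi.single_apply]
    split_ifs <;> simp
  have h2 := congrArg (fun D : Derivation (R K) (Pev K) (Pev K) => D p) h
  simp only [Derivation.commutator_apply, Derivation.zero_apply] at h2
  exact sub_eq_zero.1 h2

/-- linear versions -/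
def dXL (a : ℕ+) : SuperSpace K →ₗ[R K] SuperSpace K :=
  LinearMap.rTensor (Podd K) (MvPolynomial.pderiv a).toLinearMap
/-- linear versions -/
def mXL (a : ℕ+) : SuperSpace K →ₗ[R K] SuperSpace K :=
  LinearMap.rTensor (Podd K) (LinearMap.mulLeft (R K) (MvPolynomial.X a))
/-- linear versions -/
def dTL (a : ℕ) : SuperSpace K →ₗ[R K] SuperSpace K :=
  LinearMap.lTensor (Pev K) (CliffordAlgebra.contractLeft (Finsupp.lapply a))
/-- linear versions -/
def mTL (a : ℕ) : SuperSpace K →ₗ[R K] SuperSpace K :=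
  LinearMap.lTensor (Pev K)
    (LinearMap.mulLeft (R K) (ExteriorAlgebra.ι (R K) (Finsupp.single a 1)))

lemma dX_eq (a : ℕ+) (v) : dX K a v = dXL K a v := rfl
lemma mX_eq (a : ℕ+) (v) : mX K a v = mXL K a v := rfl
lemma dT_eq (a : ℕ) (v) : dT K a v = dTL K a v := rfl
lemma mT_eq (a : ℕ) (v) : mT K a v = mTL K a v := rfl

lemma dXL_tmul (a : ℕ+) (p : Pev K) (q : Podd K) :
    dXL K a (p ⊗ₜ q) = (MvPolynomial.pderiv a p) ⊗ₜ q := rfl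
lemma mXL_tmul (a : ℕ+) (p : Pev K) (q : Podd K) :
    mXL K a (p ⊗ₜ q) = (MvPolynomial.X a * p) ⊗ₜ q := rfl
lemma dTL_tmul (a : ℕ) (p : Pev K) (q : Podd K) :
    dTL K a (p ⊗ₜ q) = p ⊗ₜ (CliffordAlgebra.contractLeft (Finsupp.lapply a) q) := rfl
lemma mTL_tmul (a : ℕ) (p : Pev K) (q : Podd K) :
    mTL K a (p ⊗ₜ q) = p ⊗ₜ (ExteriorAlgebra.ι (R K) (Finsupp.single a 1) * q) := rfl

lemma dX_dX (a b : ℕ+) (v : SuperSpace K) : dXL K a (dXL K b v) = dXL K b (dXL K a v) := by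
  induction v using TensorProduct.induction_on with
  | zero => simp only [map_zero]
  | add x y hx hy => simp only [map_add, hx, hy]
  | tmul p q => simp only [dXL_tmul, aux_pderiv_comm K a b]

lemma mX_mX (a b : ℕ+) (v : SuperSpace K) : mXL K a (mXL K b v) = mXL K b (mXL K a v) := by
  induction v using TensorProduct.induction_on with
  | zero => simp only [map_zero]
  | add x y hx hy => simp only [map_add, hx, hy]
  | tmul p q => simp only [mXL_tmul, mul_left_comm]

lemma dX_mX (a b : ℕ+) (v : SuperSpace K) :
    dXL K a (mXL K b v) = mXL K b (dXL K a v) + if a = b then v else 0 := by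
  induction v using TensorProduct.induction_on with
  | zero => simp only [map_zero, ite_self, add_zero]
  | add x y hx hy =>
    simp only [map_add, hx, hy]
    split_ifs
    · abel
    · abel
  | tmul p q =>
    simp only [dXL_tmul, mXL_tmul]
    rw [MvPolynomial.pderiv_mul, MvPolynomial.pderiv_X, TensorProduct.add_tmul, add_comm]
    congr 1
    by_cases h : a = b
    · subst h; simp
    · simp [h, Pi.single_apply, Ne.symm h]

lemma dT_dT (a b : ℕ) (v : SuperSpace K) : dTL K a (dTL K b v) + dTL K b (dTL K a v) = 0 := by
  induction v using TensorProduct.induction_on with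
  | zero => simp only [map_zero, add_zero]
  | add x y hx hy =>
    simp only [map_add]
    rw [add_add_add_comm, hx, hy, add_zero]
  | tmul p q =>
    simp only [dTL_tmul]
    rw [← TensorProduct.tmul_add, CliffordAlgebra.contractLeft_comm, neg_add_cancel,
      TensorProduct.tmul_zero]

lemma mT_mT (a b : ℕ) (v : SuperSpace K) : mTL K a (mTL K b v) + mTL K b (mTL K a v) = 0 := by
  induction v using TensorProduct.induction_on with
  | zero => simp only [map_zero, add_zero]
  | add x y hx hy =>
    simp only [map_add]
    rw [add_add_add_comm, hx, hy, add_zero]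
  | tmul p q =>
    simp only [mTL_tmul]
    rw [← TensorProduct.tmul_add, ← mul_assoc, ← mul_assoc, ← add_mul,
      ExteriorAlgebra.ι_add_mul_swap, zero_mul, TensorProduct.tmul_zero]

lemma dT_mT (a b : ℕ) (v : SuperSpace K) :
    dTL K a (mTL K b v) + mTL K b (dTL K a v) = if a = b then v else 0 := by
  induction v using TensorProduct.induction_on with
  | zero => simp only [map_zero, ite_self, add_zero]
  | add x y hx hy =>
    simp only [map_add]
    rw [add_add_add_comm, hx, hy]
    split_ifs
    · rfl
    · rw [add_zero]
  | tmul p q =>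
    simp only [dTL_tmul, mTL_tmul]
    have := CliffordAlgebra.contractLeft_ι_mul (Q := (0 : QuadraticForm (R K) (ℕ →₀ R K)))
      (Finsupp.lapply (R := R K) a) (Finsupp.single b 1) q
    have h2 : CliffordAlgebra.contractLeft (Finsupp.lapply (R := R K) a)
        (ExteriorAlgebra.ι (R K) (Finsupp.single b 1) * q) +
        ExteriorAlgebra.ι (R K) (Finsupp.single b 1) *
          CliffordAlgebra.contractLeft (Finsupp.lapply (R := R K) a) q =
        (Finsupp.lapply (R := R K) a (Finsupp.single b (1 : R K))) • q :=
      eq_sub_iff_add_eq.1 this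
    rw [← TensorProduct.tmul_add, h2]
    by_cases h : a = b
    · subst h; simp
    · simp [h]

lemma even_odd (f : Pev K →ₗ[R K] Pev K) (g : Podd K →ₗ[R K] Podd K) (v : SuperSpace K) :
    LinearMap.rTensor (Podd K) f (LinearMap.lTensor (Pev K) g v) =
      LinearMap.lTensor (Pev K) g (LinearMap.rTensor (Podd K) f v) := by
  rw [← LinearMap.comp_apply, ← LinearMap.comp_apply, LinearMap.rTensor_comp_lTensor,
    LinearMap.lTensor_comp_rTensor]

lemma dX_fin (v : SuperSpace K) : ∃ B : ℕ, ∀ a : ℕ+, B ≤ (a : ℕ) → dXL K a v = 0 := by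
  induction v using TensorProduct.induction_on with
  | zero => exact ⟨0, fun a _ => map_zero _⟩
  | add x y hx hy =>
    obtain ⟨B, hB⟩ := hx
    obtain ⟨C, hC⟩ := hy
    refine ⟨max B C, fun a ha => ?_⟩
    rw [map_add, hB a (le_trans (le_max_left _ _) ha), hC a (le_trans (le_max_right _ _) ha),
      add_zero]
  | tmul p q =>
    refine ⟨(p.vars.sup (fun a : ℕ+ => (a : ℕ))) + 1, fun a ha => ?_⟩
    rw [dXL_tmul, MvPolynomial.pderiv_eq_zero_of_notMem_vars, TensorProduct.zero_tmul]
    intro hm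
    have := Finset.le_sup (f := fun a : ℕ+ => (a : ℕ)) hm
    omega

lemma contract_fin (q : Podd K) : ∃ B : ℕ, ∀ a : ℕ, B ≤ a →
    CliffordAlgebra.contractLeft (Finsupp.lapply (R := R K) a) q = 0 := by
  induction q using CliffordAlgebra.left_induction with
  | algebraMap r => exact ⟨0, fun a _ => CliffordAlgebra.contractLeft_algebraMap _ _ _⟩
  | add x y hx hy =>
    obtain ⟨B, hB⟩ := hx
    obtain ⟨C, hC⟩ := hy
    refine ⟨max B C, fun a ha => ?_⟩
    rw [map_add, hB a (le_trans (le_max_left _ _) ha), hC a (le_trans (le_max_right _ _) ha),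
      add_zero]
  | ι_mul x m hx =>
    obtain ⟨B, hB⟩ := hx
    refine ⟨max B (m.support.sup id + 1), fun a ha => ?_⟩
    rw [CliffordAlgebra.contractLeft_ι_mul, hB a (le_trans (le_max_left _ _) ha)]
    have : m a = 0 := by
      by_contra h
      have h1 := Finset.le_sup (f := id) (Finsupp.mem_support_iff.2 h)
      have h2 := le_trans (le_max_right _ _) ha
      simp only [id] at h1
      omega
    simp [this]

lemma dT_fin (v : SuperSpace K) : ∃ B : ℕ, ∀ a : ℕ, B ≤ a → dTL K a v = 0 := by
  induction v using TensorProduct.induction_on with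
  | zero => exact ⟨0, fun a _ => map_zero _⟩
  | add x y hx hy =>
    obtain ⟨B, hB⟩ := hx
    obtain ⟨C, hC⟩ := hy
    refine ⟨max B C, fun a ha => ?_⟩
    rw [map_add, hB a (le_trans (le_max_left _ _) ha), hC a (le_trans (le_max_right _ _) ha),
      add_zero]
  | tmul p q =>
    obtain ⟨B, hB⟩ := contract_fin K q
    exact ⟨B, fun a ha => by rw [dTL_tmul, hB a ha, TensorProduct.tmul_zero]⟩

lemma two_eq : (2 : R K) = LaurentPolynomial.C (2 : K) := (map_ofNat LaurentPolynomial.C 2).symm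

lemma cs_half : 2 * cs K (2 : K)⁻¹ = 1 := by
  rw [two_eq, cs, ← map_mul, mul_inv_cancel₀ two_ne_zero, map_one]

lemma cs_sqrt (hs2 : s2 ^ 2 = 2) : 2 * (cs K s2⁻¹) ^ 2 = 1 := by
  rw [two_eq, cs, ← map_pow, ← map_mul, inv_pow, hs2, mul_inv_cancel₀ two_ne_zero, map_one]

lemma T_inv : (LaurentPolynomial.T 1 : R K) * LaurentPolynomial.T (-1) = 1 := by
  rw [← LaurentPolynomial.T_add]; simp

lemma hb_eq : hb K = (LaurentPolynomial.T 1 : R K) ^ 2 := by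
  rw [hb, LaurentPolynomial.T_pow]; norm_num

/-- The concrete oscillators. -/
def cosc (hs2 : s2 ^ 2 = 2) : Osc (R K) (SuperSpace K) where
  T := LaurentPolynomial.T 1
  U := LaurentPolynomial.T (-1)
  TU := T_inv K
  h := cs K (2 : K)⁻¹
  h2 := cs_half K
  c := cs K s2⁻¹
  c2 := cs_sqrt K s2 hs2
  dx := dXL K
  mx := mXL K
  dt := dTL K
  mt := mTL K
  dxdx := dX_dX K
  mxmx := mX_mX K
  dxmx := dX_mX K
  dtdt := dT_dT K
  mtmt := mT_mT K
  dtmt := dT_mT K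
  dxdt a b v := even_odd K _ _ v
  dxmt a b v := even_odd K _ _ v
  mxdt a b v := even_odd K _ _ v
  mxmt a b v := even_odd K _ _ v
  dxfin := dX_fin K
  dtfin := dT_fin K

/-- The concrete modes. -/
def cmodes (hs2 : s2 ^ 2 = 2) : Modes (R K) (SuperSpace K) := (cosc K s2 hs2).toModes

lemma bos_eq (hs2 : s2 ^ 2 = 2) (n : ℤ) (v) : bos K n v = (cmodes K s2 hs2).b n v := by
  rw [show (cmodes K s2 hs2).b n = (cosc K s2 hs2).bm n from rfl]
  unfold bos Osc.bm
  split_ifs <;> rfl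

lemma fer_eq (hs2 : s2 ^ 2 = 2) (n : ℤ) (v) : fer K s2 n v = (cmodes K s2 hs2).f n v := by
  rw [show (cmodes K s2 hs2).f n = (cosc K s2 hs2).fm n from rfl]
  unfold fer Osc.fm
  rw [hb_eq]
  split_ifs <;> rfl

lemma nb_conc (hs2 : s2 ^ 2 = 2) (n m : ℤ) (v) : nb K n m v = (cmodes K s2 hs2).nb n m v := by
  unfold nb Modes.nb
  split_ifs
  all_goals
    simp only [bos_eq K s2 hs2]
    rfl

lemma nf_conc (hs2 : s2 ^ 2 = 2) (n m : ℤ) (v) : nf K s2 n m v = (cmodes K s2 hs2).nf n m v := by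
  unfold nf Modes.nf
  split_ifs
  all_goals
    simp only [fer_eq K s2 hs2]
    rfl

lemma cs_eighth : cs K (8 : K)⁻¹ = cs K (2 : K)⁻¹ ^ 3 := by
  rw [cs, cs, ← map_pow, inv_pow]; norm_num

lemma Hop_conc (hs2 : s2 ^ 2 = 2) (N : ℤ) (D : ℤ → K) (i : ℤ) (v : SuperSpace K) :
    Hop K s2 N D i v =
      (cmodes K s2 hs2).Hh (LaurentPolynomial.T 1) N (fun i => cs K (D i)) i v := by
  unfold Hop Modes.Hh Modes.L
  simp only [nb_conc K s2 hs2, nf_conc K s2 hs2]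
  have E1 : (cmodes K s2 hs2).LB (i + N - 1) v =
      ∑ᶠ n : ℤ, (cmodes K s2 hs2).nb n (i + N - 2 - n) v := by
    unfold Modes.LB
    rw [Modes.lsum_apply]
    refine finsum_congr fun n => ?_
    rw [show i + N - 1 - 1 - n = i + N - 2 - n by ring]
  have E2 : (cmodes K s2 hs2).LFe (i + N - 1) v =
      ∑ᶠ j : ℤ, (((2 * j + i + N - 1 : ℤ) : R K) * cs K (2 : K)⁻¹) •
          (cmodes K s2 hs2).nf (-j) (i + N - 1 + j) v := by
    unfold Modes.LFe
    rw [Modes.lsum_apply]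
    refine finsum_congr fun n => ?_
    rw [show 2 * n + (i + N - 1) = 2 * n + i + N - 1 by ring]
    rfl
  rw [← E1, ← E2]
  have E3 : hb K • dXi K i v =
      (if 1 ≤ i then (LaurentPolynomial.T 1 : R K) • (cmodes K s2 hs2).b (i - 1) else 0) v := by
    unfold dXi
    split_ifs with h
    · have e : (cmodes K s2 hs2).b (i - 1) v = (LaurentPolynomial.T 1 : R K) •
          dX K ⟨(i - 1 + 1).toNat, by omega⟩ v := by
        rw [← bos_eq]
        unfold bos
        rw [dif_pos (by omega)]
      rw [LinearMap.smul_apply, e, smul_smul, hb_eq, sq]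
      simp only [sub_add_cancel]
    · simp
  have E4 : (cmodes K s2 hs2).h = cs K (2 : K)⁻¹ := rfl
  rw [E3, E4, cs_eighth, hb_eq]
  have c1 : (i = 1 - N) = (i + N - 1 = 0) := propext (by omega)
  simp only [c1]
  split_ifs <;> simp only [LinearMap.add_apply, LinearMap.smul_apply, LinearMap.id_apply,
    LinearMap.zero_apply] <;> module

lemma Fop_conc (hs2 : s2 ^ 2 = 2) (N : ℤ) (n : ℤ) (v : SuperSpace K) :
    Fop K s2 N n v = (cmodes K s2 hs2).Ff (LaurentPolynomial.T 1) N n v := by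
  unfold Fop Modes.Ff
  have E1 : (cmodes K s2 hs2).G (n + N) v =
      ∑ᶠ m : ℤ, bos K m (fer K s2 (n + N - m) v) := by
    unfold Modes.G
    rw [Modes.lsum_apply]
    refine finsum_congr fun m => ?_
    rw [bos_eq K s2 hs2, fer_eq K s2 hs2]
    rfl
  have E3 : hb K • dTi K (n + 1) v =
      (if 0 ≤ n then (LaurentPolynomial.T 1 : R K) • (cmodes K s2 hs2).f (n + 1) else 0) v := by
    unfold dTi
    by_cases h : 0 ≤ n
    · rw [if_pos (by omega), if_pos h, LinearMap.smul_apply, ← fer_eq]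
      unfold fer
      rw [if_pos (by omega), smul_smul, hb_eq, sq]
    · rw [if_neg (by omega), if_neg h]
      simp
  rw [← E1, E3, hb_eq, LinearMap.add_apply, LinearMap.smul_apply]

end Concrete

/-- For `N ≥ −1` and scalars `D_1, …, D_{N+1}`, the operators `H_i`
(`i ∈ ℤ_{≥1}`) and `F_r` (`r = n + 1/2 ∈ ℤ_{≥0} + 1/2`) satisfy the Neveu–Schwarz super
Virasoro relations `[H_i, H_j] = ℏ(i−j) H_{i+j+N−1}`,
`[H_i, F_r] = ℏ((i−N−1)/2 − r) F_{i+r+N−1}` and `{F_r, F_s} = 2ℏ H_{r+s+N+1}`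
(out-of-range right-hand subscripts in the middle relation only occur with vanishing
scalar coefficient); a super quantum Airy structure with one extra fermionic
variable `θ⁰`. -/
theorem statement10 (hs2 : s2 ^ 2 = 2) (N : ℤ) (hN : -1 ≤ N) (D : ℤ → K) :
    (∀ i j : ℤ, 1 ≤ i → 1 ≤ j → ∀ v : SuperSpace K,
      Hop K s2 N D i (Hop K s2 N D j v) - Hop K s2 N D j (Hop K s2 N D i v)
        = (hb K * ((i - j : ℤ) : R K)) • Hop K s2 N D (i + j + N - 1) v) ∧
    (∀ i n : ℤ, 1 ≤ i → 0 ≤ n → ∀ v : SuperSpace K,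
      Hop K s2 N D i (Fop K s2 N n v) - Fop K s2 N n (Hop K s2 N D i v)
        = (hb K * ((i - N - 2 - 2 * n : ℤ) : R K) * cs K (2 : K)⁻¹) •
            Fop K s2 N (i + n + N - 1) v) ∧
    (∀ n m : ℤ, 0 ≤ n → 0 ≤ m → ∀ v : SuperSpace K,
      Fop K s2 N n (Fop K s2 N m v) + Fop K s2 N m (Fop K s2 N n v)
        = (2 * hb K) • Hop K s2 N D (n + m + N + 2) v) := by
  refine ⟨fun i j hi hj v => ?_, fun i n hi hn v => ?_, fun n m hn hm v => ?_⟩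
  · simp only [Hop_conc K s2 hs2, hb_eq]
    exact (cmodes K s2 hs2).HH _ N hN _ i j hi hj v
  · simp only [Hop_conc K s2 hs2, Fop_conc K s2 hs2, hb_eq]
    exact (cmodes K s2 hs2).HF _ N hN _ i n hi hn v
  · simp only [Hop_conc K s2 hs2, Fop_conc K s2 hs2, hb_eq]
    exact (cmodes K s2 hs2).FF _ N hN _ n m hn hm v

end
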